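/- Let (W,S) be a Coxeter system. Any expression (word in S*) for an element w of W can be transformed into a reduced expression for w by a sequence of nil moves (deletion of a factor ss for s in S) and braid moves (replacement of an alternating factor stst... of length m(s,t) by tsts... of length m(s,t)). -/

import Mathlib

/-- A single nil move (deletion of a factor `ss`) or braid move (replacement of an
alternating factor `stst⋯` of length `m(s,t)` by `tsts⋯` of length `m(s,t)`) applied to a
word in the generators of a Coxeter system. -/
def NilBraidMove {B : Type*} (M : CoxeterMatrix B) (ω ω' : List B) : Prop :=
  (∃ (l₁ l₂ : List B) (s : B), ω = l₁ ++ [s, s] ++ l₂ ∧ ω' = l₁ ++ l₂) ∨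
  (∃ (l₁ l₂ : List B) (s t : B), M s t ≠ 0 ∧
    ω = l₁ ++ CoxeterSystem.alternatingWord s t (M s t) ++ l₂ ∧
    ω' = l₁ ++ CoxeterSystem.alternatingWord t s (M s t) ++ l₂)

open Module Polynomial.Chebyshev

namespace CoxeterMatrix

variable {B : Type*} (M : CoxeterMatrix B)

/-- The linear form `2⟨αᵢ, ·⟩` of the geometric representation, where
`⟨αᵢ, αⱼ⟩ = -cos (π / M i j)`; the value at `M i j = 0` is `-1`. -/
noncomputable def geometricCoroot (i : B) : Dual ℝ (B →₀ ℝ) :=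
  Finsupp.lsum ℝ fun j ↦ LinearMap.toSpanSingleton ℝ ℝ (-2 * Real.cos (Real.pi / M i j))

theorem geometricCoroot_single (i j : B) :
    M.geometricCoroot i (Finsupp.single j 1) = -2 * Real.cos (Real.pi / M i j) := by
  simp [geometricCoroot]

theorem geometricCoroot_single_self (i : B) :
    M.geometricCoroot i (Finsupp.single i 1) = 2 := by
  simp [geometricCoroot_single]

/-- The simple reflections of the geometric representation. -/
noncomputable def geometricReflection (i : B) : (B →₀ ℝ) ≃ₗ[ℝ] (B →₀ ℝ) :=
  reflection (M.geometricCoroot_single_self i)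

theorem geometricCoroot_mul_sub_two (i j : B) :
    2 * Real.cos (2 * Real.pi / M i j) =
      M.geometricCoroot i (Finsupp.single j 1) * M.geometricCoroot j (Finsupp.single i 1) - 2 := by
  rw [geometricCoroot_single, geometricCoroot_single, M.symmetric j i, mul_div_assoc,
    Real.cos_two_mul]
  ring

theorem two_le_of_ne {i j : B} (hij : i ≠ j) (h0 : M i j ≠ 0) : 2 ≤ M i j := by
  have := M.off_diagonal i j hij
  omega

theorem sin_two_pi_div_pos {m : ℕ} (hm : 3 ≤ m) : 0 < Real.sin (2 * Real.pi / m) := by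
  have h3 : (3 : ℝ) ≤ m := by exact_mod_cast hm
  apply Real.sin_pos_of_pos_of_lt_pi
  · positivity
  · rw [div_lt_iff₀ (by linarith)]
    nlinarith [Real.pi_pos]

theorem geometricReflection_isLiftable : M.IsLiftable M.geometricReflection := by
  intro i j
  by_cases hij : i = j
  · subst hij
    apply LinearEquiv.ext
    intro v
    simpa [geometricReflection] using
      involutive_reflection (M.geometricCoroot_single_self i) v
  obtain h0 | h0 := eq_or_ne (M i j) 0
  · simp [h0]
  obtain h2 | h3 : M i j = 2 ∨ 3 ≤ M i j := by have := M.two_le_of_ne hij h0; omega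
  · have hx := M.geometricCoroot_single i j
    have hy := M.geometricCoroot_single j i
    rw [M.symmetric j i] at hy
    rw [h2] at hx hy ⊢
    norm_num at hx hy
    apply LinearEquiv.ext
    intro v
    simp only [geometricReflection, pow_two, LinearEquiv.mul_apply, reflection_apply, map_sub,
      map_smul, hx, hy, geometricCoroot_single_self, LinearEquiv.coe_one, id_eq]
    module
  · apply LinearEquiv.ext
    intro v
    have hs := (sin_two_pi_div_pos h3).ne'
    have hmul : (M i j : ℝ) * (2 * Real.pi / M i j) = 2 * Real.pi := by
      field_simp
    have hS := fun n : ℤ ↦ S_two_mul_real_cos (2 * Real.pi / M i j) n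
    rw [geometricReflection, geometricReflection,
      reflection_mul_reflection_pow_apply _ _ _ _ _ (M.geometricCoroot_mul_sub_two i j)]
    set θ := 2 * Real.pi / M i j
    obtain ⟨k, hk⟩ | ⟨k, hk⟩ := Nat.even_or_odd (M i j)
    · have h1 : ((M i j : ℤ) - 2) / 2 = k - 1 := by omega
      have h2 : ((M i j : ℤ) - 1) / 2 = k - 1 := by omega
      have hz : (S ℝ ((k : ℤ) - 1)).eval (2 * Real.cos θ) = 0 := by
        have := hS (k - 1)
        have hkθ : (k : ℝ) * θ = Real.pi := by
          rw [hk] at hmul; push_cast at hmul; linarith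
        push_cast at this
        rw [sub_add_cancel, hkθ, Real.sin_pi] at this
        exact (mul_eq_zero.mp this).resolve_right hs
      simp [h1, h2, hz]
    · have h1 : ((M i j : ℤ) - 2) / 2 = k - 1 := by omega
      have h2 : ((M i j : ℤ) - 1) / 2 = k := by omega
      have h3 : ((M i j : ℤ) - 3) / 2 = k - 1 := by omega
      have h4 : (M i j : ℤ) / 2 = k := by omega
      have hz : (S ℝ (k : ℤ)).eval (2 * Real.cos θ) +
          (S ℝ ((k : ℤ) - 1)).eval (2 * Real.cos θ) = 0 := by
        have ha := hS k
        have hb := hS (k - 1)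
        have hkθ : ((k : ℝ) + 1) * θ = 2 * Real.pi - k * θ := by
          rw [hk] at hmul; push_cast at hmul; linarith
        push_cast at ha hb
        rw [hkθ, Real.sin_two_pi_sub] at ha
        rw [sub_add_cancel] at hb
        refine (mul_eq_zero.mp (?_ : _ * Real.sin θ = 0)).resolve_right hs
        rw [add_mul, ha, hb, neg_add_cancel]
      simp [h1, h2, h3, h4, hz]

theorem geometricReflection_mul_pow_ne_one {i j : B} (hij : i ≠ j) {k : ℕ} (hk : 0 < k)
    (hkm : M i j = 0 ∨ k < M i j) :
    (M.geometricReflection i * M.geometricReflection j) ^ k ≠ 1 := by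
  intro h
  have key := reflection_mul_reflection_pow_apply_self (M.geometricCoroot_single_self i)
    (M.geometricCoroot_single_self j) k _ (M.geometricCoroot_mul_sub_two i j)
  rw [← geometricReflection, ← geometricReflection, h, M.geometricCoroot_single j i,
    M.symmetric j i] at key
  have hi := DFunLike.congr_fun key i
  have hj := DFunLike.congr_fun key j
  simp only [LinearEquiv.coe_one, id_eq, Finsupp.coe_add, Finsupp.coe_smul, Pi.add_apply,
    Pi.smul_apply, Finsupp.single_eq_same, Finsupp.single_eq_of_ne hij,
    Finsupp.single_eq_of_ne hij.symm, smul_eq_mul, mul_one, mul_zero, add_zero, zero_add] at hi hj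
  obtain h0 | h0 := eq_or_ne (M i j) 0
  · simp [h0] at hj
    omega
  have hlt : k < M i j := hkm.resolve_left h0
  obtain h2 | h3 : M i j = 2 ∨ 3 ≤ M i j := by have := M.two_le_of_ne hij h0; omega
  · obtain rfl : k = 1 := by omega
    norm_num [h2, mul_div_cancel_left₀] at hi
  · have hs := (sin_two_pi_div_pos h3).ne'
    have h3' : (3 : ℝ) ≤ M i j := by exact_mod_cast h3
    have hlt' : (k : ℝ) < M i j := by exact_mod_cast hlt
    have hk' : (0 : ℝ) < k := by exact_mod_cast hk
    have hcos : 0 < Real.cos (Real.pi / M i j) := by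
      have hpi := Real.pi_pos
      apply Real.cos_pos_of_mem_Ioo
      constructor
      · have : 0 < Real.pi / M i j := by positivity
        linarith
      · exact div_lt_div_of_pos_left hpi (by norm_num) (by linarith)
    have hS : (S ℝ ((k : ℤ) - 1)).eval (2 * Real.cos (2 * Real.pi / M i j)) = 0 := by
      refine (mul_eq_zero.mp hj.symm).resolve_right ?_
      simpa using hcos.ne'
    have ha := S_two_mul_real_cos (2 * Real.pi / M i j) k
    have hb := S_two_mul_real_cos (2 * Real.pi / M i j) (k - 1)
    have hθ : (k : ℝ) * (2 * Real.pi / M i j) < 2 * Real.pi := by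
      rw [← mul_div_assoc, div_lt_iff₀ (by linarith), mul_comm]
      gcongr
    have hθ0 : 0 < (k : ℝ) * (2 * Real.pi / M i j) := by positivity
    rw [hS, add_zero] at hi
    rw [← hi, one_mul] at ha
    rw [hS, zero_mul] at hb
    push_cast at ha hb
    rw [sub_add_cancel] at hb
    rw [add_mul, one_mul, Real.sin_add, ← hb, zero_mul, zero_add] at ha
    have hc : Real.cos (k * (2 * Real.pi / M i j)) = 1 := by
      apply mul_right_cancel₀ hs
      rw [← ha, one_mul]
    rw [Real.cos_eq_one_iff_of_lt_of_lt (by linarith) hθ] at hc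
    exact hθ0.ne' hc

end CoxeterMatrix

namespace CoxeterSystem

variable {B W : Type*} [Group W] {M : CoxeterMatrix B} (cs : CoxeterSystem M W)

theorem simple_mul_simple_pow_ne_one {i j : B} (hij : i ≠ j) {k : ℕ} (hk : 0 < k)
    (hkm : M i j = 0 ∨ k < M i j) : (cs.simple i * cs.simple j) ^ k ≠ 1 := by
  intro h
  apply M.geometricReflection_mul_pow_ne_one hij hk hkm
  simpa using congrArg (cs.lift ⟨_, M.geometricReflection_isLiftable⟩) h

theorem rightInvSeq_alternatingWord (i j : B) (n : ℕ) :
    cs.rightInvSeq (alternatingWord i j n) =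
      ((List.range n).map fun k ↦ cs.simple j * (cs.simple i * cs.simple j) ^ k).reverse := by
  induction n generalizing i j with
  | zero => simp [alternatingWord]
  | succ n ih =>
    rw [alternatingWord_succ, rightInvSeq_concat, ih, List.range_succ_eq_map]
    simp only [List.map_reverse, List.map_map, List.concat_eq_append, List.map_cons,
      List.reverse_cons, pow_zero, mul_one]
    congr 3
    ext k
    simp only [Function.comp_apply, MulAut.conj_apply, inv_simple, mul_assoc, Nat.succ_eq_add_one]
    rw [mul_pow_mul, ← mul_assoc (cs.simple i), ← pow_succ']

open Classical in
/-- The action of a simple reflection on pairs of an element `t` and a sign, which conjugates `t`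
and flips the sign exactly when `t` is that reflection. -/
noncomputable def signedConj (i : B) : Function.End (W × ZMod 2) := fun p ↦
  (cs.simple i * p.1 * (cs.simple i)⁻¹, p.2 + if p.1 = cs.simple i then 1 else 0)

open Classical in
theorem prod_map_signedConj_apply (ω : List B) (t : W) (e : ZMod 2) :
    (ω.map cs.signedConj).prod (t, e) =
      (cs.wordProd ω * t * (cs.wordProd ω)⁻¹, e + ((cs.rightInvSeq ω).count t : ZMod 2)) := by
  induction ω with
  | nil => simp [Function.End.one_def]
  | cons i ω ih =>
    have h : cs.wordProd ω * t * (cs.wordProd ω)⁻¹ = cs.simple i ↔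
        (cs.wordProd ω)⁻¹ * cs.simple i * cs.wordProd ω = t := by
      constructor
      · rintro h
        rw [← h]; group
      · rintro rfl
        group
    have hcons : ((i :: ω).map cs.signedConj).prod (t, e) =
        cs.signedConj i ((ω.map cs.signedConj).prod (t, e)) := by
      rw [List.map_cons, List.prod_cons]
      rfl
    rw [hcons, ih, signedConj]
    simp only [rightInvSeq, wordProd_cons, List.count_cons, beq_iff_eq, h]
    ext
    · simp [mul_assoc]
    · push_cast
      simp [add_assoc]

theorem signedConj_isLiftable : M.IsLiftable cs.signedConj := by
  classical
  intro i j
  have hpow (m : ℕ) : (cs.signedConj i * cs.signedConj j) ^ m =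
      ((alternatingWord i j (2 * m)).map cs.signedConj).prod := by
    induction m with
    | zero => simp [alternatingWord]
    | succ m ih =>
      rw [pow_succ, ih, mul_add, mul_one, alternatingWord_succ, alternatingWord_succ]
      simp
  funext ⟨t, e⟩
  rw [hpow, prod_map_signedConj_apply, rightInvSeq_alternatingWord, two_mul, List.range_add]
  have hper : (fun k ↦ cs.simple j * (cs.simple i * cs.simple j) ^ k) ∘ (M i j + ·) =
      fun k ↦ cs.simple j * (cs.simple i * cs.simple j) ^ k := by
    ext k
    simp [pow_add]
  rw [List.map_append, List.map_map, hper, List.count_reverse, List.count_append, Nat.cast_add,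
    CharTwo.add_self_eq_zero (R := ZMod 2), prod_alternatingWord_eq_mul_pow]
  simp [← two_mul, Function.End.one_def]

open Classical in
/-- The parity of the multiplicity of `t` in the right inversion sequence of a word depends only on
the product of the word. -/
theorem count_rightInvSeq_cast_eq {ω ω' : List B} (h : cs.wordProd ω = cs.wordProd ω') (t : W) :
    ((cs.rightInvSeq ω).count t : ZMod 2) = (cs.rightInvSeq ω').count t := by
  have hlift (ω : List B) : cs.lift ⟨_, cs.signedConj_isLiftable⟩ (cs.wordProd ω) =
      (ω.map cs.signedConj).prod := by
    rw [wordProd, map_list_prod, List.map_map]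
    congr 2
    ext1 i
    exact cs.lift_apply_simple cs.signedConj_isLiftable i
  have key := congrFun ((hlift ω).symm.trans ((congrArg _ h).trans (hlift ω'))) (t, 0)
  rw [prod_map_signedConj_apply, prod_map_signedConj_apply] at key
  simpa using congrArg Prod.snd key

theorem exists_isReduced_cons {w : W} {i : B} (h : cs.IsLeftDescent w i) :
    ∃ ω, cs.IsReduced (i :: ω) ∧ cs.wordProd (i :: ω) = w := by
  obtain ⟨ω, hω, hw⟩ := cs.exists_isReduced (cs.simple i * w)
  have hprod : cs.wordProd (i :: ω) = w := by rw [wordProd_cons, ← hw]; simp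
  refine ⟨ω, ?_, hprod⟩
  rw [IsReduced, hprod, List.length_cons, ← hω.eq, ← hw]
  exact (cs.isLeftDescent_iff.mp h).symm

theorem simple_mem_leftInvSeq {ω : List B} {i : B} (h : cs.IsLeftDescent (cs.wordProd ω) i) :
    cs.simple i ∈ cs.leftInvSeq ω := by
  classical
  obtain ⟨ρ, hρ, hprod⟩ := cs.exists_isReduced_cons h
  have key := cs.count_rightInvSeq_cast_eq (ω := ω.reverse) (ω' := (i :: ρ).reverse)
    (by rw [wordProd_reverse, wordProd_reverse, hprod]) (cs.simple i)
  rw [rightInvSeq_reverse, rightInvSeq_reverse, List.count_reverse, List.count_reverse,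
    List.count_eq_one_of_mem hρ.nodup_leftInvSeq (by simp [leftInvSeq])] at key
  by_contra hmem
  rw [List.count_eq_zero_of_not_mem hmem] at key
  simp at key

theorem leftInvSeq_append (ω ω' : List B) :
    cs.leftInvSeq (ω ++ ω') =
      cs.leftInvSeq ω ++ (cs.leftInvSeq ω').map (MulAut.conj (cs.wordProd ω)) := by
  induction ω with
  | nil => simp
  | cons i ω ih => simp [leftInvSeq, ih, wordProd_cons, List.map_map, Function.comp_def]

/-- The exchange property, for a word split into two factors. -/
theorem exchange_append {ω ω' : List B} {i : B}
    (h : cs.IsLeftDescent (cs.wordProd (ω ++ ω')) i) :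
    cs.simple i ∈ cs.leftInvSeq ω ∨ ∃ ρ, ρ.length + 1 = ω'.length ∧
      cs.simple i * cs.wordProd (ω ++ ω') = cs.wordProd (ω ++ ρ) := by
  have hmem := cs.simple_mem_leftInvSeq h
  rw [leftInvSeq_append, List.mem_append, List.mem_map] at hmem
  refine hmem.imp_right ?_
  rintro ⟨t, ht, hconj⟩
  obtain ⟨k, hk, rfl⟩ := List.mem_iff_getElem.mp ht
  have herase := cs.getD_leftInvSeq_mul_wordProd ω' k
  rw [List.getD_eq_getElem _ 1 hk] at herase
  refine ⟨ω'.eraseIdx k, List.length_eraseIdx_add_one (by simpa using hk), ?_⟩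
  rw [wordProd_append, wordProd_append, ← herase, ← hconj, MulAut.conj_apply]
  group

theorem eq_pow_of_mem_leftInvSeq_alternatingWord (i j : B) (n : ℕ) {t : W}
    (ht : t ∈ cs.leftInvSeq (alternatingWord i j n)) :
    ∃ k, 0 < k ∧ k ≤ n ∧ cs.simple (if Even n then j else i) * t =
      (cs.simple (if Even n then j else i) * cs.simple (if Even n then i else j)) ^ k := by
  induction n generalizing t with
  | zero => simp [alternatingWord] at ht
  | succ n ih =>
    rw [alternatingWord_succ', leftInvSeq, List.mem_cons, List.mem_map] at ht
    have hparity (a b : B) : (if Even (n + 1) then a else b) = if Even n then b else a := by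
      simp only [Nat.even_add_one]
      split_ifs <;> rfl
    rw [hparity, hparity]
    obtain rfl | ⟨z, hz, rfl⟩ := ht
    · exact ⟨1, one_pos, by omega, by rw [pow_one]⟩
    · obtain ⟨k, hk0, hk, hz⟩ := ih hz
      refine ⟨k + 1, by omega, by omega, ?_⟩
      rw [MulAut.conj_apply, hz, inv_simple, mul_pow_mul, ← mul_assoc, ← pow_succ']

theorem simple_notMem_leftInvSeq_alternatingWord {i j : B} (hij : i ≠ j) {n : ℕ}
    (hn : M i j = 0 ∨ n < M i j) :
    cs.simple (if Even n then j else i) ∉ cs.leftInvSeq (alternatingWord i j n) := by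
  intro hmem
  obtain ⟨k, hk0, hkn, hk⟩ := cs.eq_pow_of_mem_leftInvSeq_alternatingWord i j n hmem
  rw [simple_mul_simple_self] at hk
  have hkm : M i j = 0 ∨ k < M i j := hn.imp_right (by omega)
  by_cases he : Even n
  · simp only [he, if_true] at hk
    exact cs.simple_mul_simple_pow_ne_one hij.symm hk0 (by rwa [M.symmetric j i]) hk.symm
  · simp only [he, if_false] at hk
    exact cs.simple_mul_simple_pow_ne_one hij hk0 hkm hk.symm

/-- An element with two distinct left descents has reduced words starting with alternating words
in these letters, of any length up to the order of their product. -/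
theorem exists_isReduced_alternatingWord_append {w : W} {i j : B} (hij : i ≠ j)
    (hi : cs.IsLeftDescent w i) (hj : cs.IsLeftDescent w j) (n : ℕ)
    (hn : M i j = 0 ∨ n ≤ M i j) :
    ∃ a b ω, (a = i ∧ b = j ∨ a = j ∧ b = i) ∧
      cs.IsReduced (alternatingWord a b n ++ ω) ∧
      cs.wordProd (alternatingWord a b n ++ ω) = w := by
  induction n with
  | zero =>
    obtain ⟨ω, hω, rfl⟩ := cs.exists_isReduced w
    exact ⟨i, j, ω, by simp, by simpa [alternatingWord] using hω, by simp [alternatingWord]⟩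
  | succ n ih =>
    obtain ⟨a, b, ω, hab, hred, rfl⟩ := ih (hn.imp_right (by omega))
    set x := if Even n then b else a with hx
    have hdesc : cs.IsLeftDescent (cs.wordProd (alternatingWord a b n ++ ω)) x := by
      rw [hx]
      split_ifs <;> rcases hab with ⟨rfl, rfl⟩ | ⟨rfl, rfl⟩ <;> assumption
    have hnotMem : cs.simple x ∉ cs.leftInvSeq (alternatingWord a b n) := by
      rcases hab with ⟨rfl, rfl⟩ | ⟨rfl, rfl⟩
      · exact cs.simple_notMem_leftInvSeq_alternatingWord hij (hn.imp_right (by omega))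
      · rw [M.symmetric] at hn
        exact cs.simple_notMem_leftInvSeq_alternatingWord hij.symm (hn.imp_right (by omega))
    obtain ⟨ρ, hlen, hρ⟩ := (cs.exchange_append hdesc).resolve_left hnotMem
    have hprod : cs.wordProd (alternatingWord a b (n + 1) ++ ρ) =
        cs.wordProd (alternatingWord a b n ++ ω) := by
      rw [alternatingWord_succ', List.cons_append, wordProd_cons, ← hx, ← hρ,
        simple_mul_simple_cancel_left]
    refine ⟨a, b, ρ, hab, ?_, hprod⟩
    rw [IsReduced, hprod, hred.eq]
    simp only [List.length_append, length_alternatingWord]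
    omega

theorem exists_isReduced_braidWord_append {w : W} {i j : B} (hij : i ≠ j)
    (hi : cs.IsLeftDescent w i) (hj : cs.IsLeftDescent w j) :
    M i j ≠ 0 ∧ ∃ ω, cs.IsReduced (braidWord M i j ++ ω) ∧
      cs.wordProd (braidWord M i j ++ ω) = w := by
  constructor
  · intro h0
    obtain ⟨a, b, ω, -, hred, hw⟩ :=
      cs.exists_isReduced_alternatingWord_append hij hi hj (cs.length w + 1) (.inl h0)
    have := hred.eq
    rw [hw, List.length_append, length_alternatingWord] at this
    omega
  · obtain ⟨a, b, ω, hab, hred, hw⟩ :=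
      cs.exists_isReduced_alternatingWord_append hij hi hj (M i j) (.inr le_rfl)
    rcases hab with ⟨rfl, rfl⟩ | ⟨rfl, rfl⟩
    · exact ⟨ω, hred, hw⟩
    · have hprod : cs.wordProd (braidWord M b a ++ ω) = w := by
        rw [wordProd_append, wordProd_braidWord_eq, braidWord, M.symmetric, ← wordProd_append, hw]
      refine ⟨ω, ?_, hprod⟩
      rw [IsReduced, hprod, ← hw, hred.eq]
      simp

theorem isLeftDescent_of_isReduced_cons {i : B} {ω : List B} (h : cs.IsReduced (i :: ω)) :
    cs.IsLeftDescent (cs.wordProd (i :: ω)) i := by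
  rw [IsLeftDescent, h.eq, wordProd_cons, simple_mul_simple_cancel_left, List.length_cons]
  exact Nat.lt_succ_of_le (cs.length_wordProd_le ω)

end CoxeterSystem

open CoxeterSystem Relation

theorem NilBraidMove.cons {B : Type*} {M : CoxeterMatrix B} (i : B) {ω ω' : List B}
    (h : NilBraidMove M ω ω') : NilBraidMove M (i :: ω) (i :: ω') := by
  obtain ⟨l₁, l₂, s, rfl, rfl⟩ | ⟨l₁, l₂, s, t, h0, rfl, rfl⟩ := h
  · exact .inl ⟨i :: l₁, l₂, s, rfl, rfl⟩
  · exact .inr ⟨i :: l₁, l₂, s, t, h0, rfl, rfl⟩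

theorem NilBraidMove.reflTransGen_cons {B : Type*} {M : CoxeterMatrix B} (i : B) {ω ω' : List B}
    (h : ReflTransGen (NilBraidMove M) ω ω') :
    ReflTransGen (NilBraidMove M) (i :: ω) (i :: ω') :=
  ReflTransGen.lift (i :: ·) (fun _ _ ↦ NilBraidMove.cons i) _ _ h

namespace CoxeterSystem

variable {B W : Type*} [Group W] {M : CoxeterMatrix B} (cs : CoxeterSystem M W)

/-- Matsumoto's theorem: any two reduced words with the same product are related by braid moves. -/
theorem IsReduced.reflTransGen_nilBraidMove {ω ω' : List B} (hω : cs.IsReduced ω)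
    (hω' : cs.IsReduced ω') (h : cs.wordProd ω = cs.wordProd ω') :
    ReflTransGen (NilBraidMove M) ω ω' := by
  have hlen : ω.length = ω'.length := by rw [← hω.eq, ← hω'.eq, h]
  obtain ⟨n, hn⟩ : ∃ n, ω.length = n := ⟨_, rfl⟩
  induction n generalizing ω ω' with
  | zero =>
    rw [List.length_eq_zero_iff.mp hn, List.length_eq_zero_iff.mp (hlen.symm.trans hn)]
  | succ n ih =>
    have same_head {i : B} {ρ ρ' : List B} (hρ : cs.IsReduced (i :: ρ))
        (hρ' : cs.IsReduced (i :: ρ')) (h : cs.wordProd (i :: ρ) = cs.wordProd (i :: ρ'))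
        (hn : (i :: ρ).length = n + 1) :
        ReflTransGen (NilBraidMove M) (i :: ρ) (i :: ρ') := by
      have hlen : (i :: ρ).length = (i :: ρ').length := by rw [← hρ.eq, ← hρ'.eq, h]
      rw [wordProd_cons, wordProd_cons] at h
      exact NilBraidMove.reflTransGen_cons i (ih (by simpa using hρ.drop 1)
        (by simpa using hρ'.drop 1) (mul_left_cancel h) (by simpa using hlen) (by simpa using hn))
    obtain ⟨i, ρ, rfl⟩ := List.exists_cons_of_length_eq_add_one hn
    obtain ⟨j, ρ', rfl⟩ := List.exists_cons_of_length_eq_add_one (hlen ▸ hn)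
    by_cases hij : i = j
    · subst hij
      exact same_head hω hω' h hn
    -- Name the letters so that `alternatingWord a b (M i j)` starts with `i`.
    obtain ⟨a, b, hab, hM, ha, hb, hi, hj⟩ : ∃ a b, (a ≠ b) ∧ M a b = M i j ∧
        cs.IsLeftDescent (cs.wordProd (i :: ρ)) a ∧ cs.IsLeftDescent (cs.wordProd (i :: ρ)) b ∧
        (∀ m, m + 1 = M i j → (if Even m then b else a) = i) ∧
        (∀ m, m + 1 = M i j → (if Even m then a else b) = j) := by
      have hdi := cs.isLeftDescent_of_isReduced_cons hω
      have hdj := h ▸ cs.isLeftDescent_of_isReduced_cons hω'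
      by_cases he : Even (M i j)
      · refine ⟨i, j, hij, rfl, hdi, hdj, ?_, ?_⟩ <;> intro m hm <;>
          rw [← hm, Nat.even_add_one] at he <;> simp [he]
      · refine ⟨j, i, Ne.symm hij, M.symmetric _ _, hdj, hdi, ?_, ?_⟩ <;> intro m hm <;>
          rw [← hm, Nat.even_add_one, not_not] at he <;> simp [he]
    obtain ⟨h0, u, hred, hprod⟩ := cs.exists_isReduced_braidWord_append hab ha hb
    have hprod' : cs.wordProd (alternatingWord b a (M a b) ++ u) = cs.wordProd (i :: ρ) := by
      rw [← hprod, wordProd_append, wordProd_append, wordProd_braidWord_eq, braidWord,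
        M.symmetric b a]
    have hred' : cs.IsReduced (alternatingWord b a (M a b) ++ u) := by
      rw [IsReduced, hprod', ← hprod, hred.eq]
      simp
    have hmove : NilBraidMove M (alternatingWord a b (M a b) ++ u)
        (alternatingWord b a (M a b) ++ u) :=
      .inr ⟨[], u, a, b, h0, rfl, rfl⟩
    obtain ⟨m, hm⟩ := Nat.exists_eq_succ_of_ne_zero h0
    have hm' : m + 1 = M i j := by omega
    rw [braidWord] at hred hprod
    rw [hm, Nat.succ_eq_add_one, alternatingWord_succ', List.cons_append, hi m hm'] at hred hprod
    rw [hm, Nat.succ_eq_add_one, alternatingWord_succ', List.cons_append, hj m hm'] at hred' hprod'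
    rw [hm, Nat.succ_eq_add_one, alternatingWord_succ', alternatingWord_succ', List.cons_append,
      List.cons_append, hi m hm', hj m hm'] at hmove
    refine ((same_head hω hred hprod.symm hn).tail hmove).trans
      (same_head hred' hω' (hprod'.trans h) ?_)
    rw [← hred'.eq, hprod', hω.eq, hn]

end CoxeterSystem

/-- Tits' theorem (Theorem 3.3.1 in Björner–Brenti): in a Coxeter system `(W, S)`, any
expression (word in `S*`) for an element `w ∈ W` can be transformed into a reduced
expression for `w` by a sequence of nil moves and braid moves. -/
theorem stmt_11 (B W : Type*) [Group W] (M : CoxeterMatrix B) (cs : CoxeterSystem M W)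
    (ω : List B) :
    ∃ ω' : List B, Relation.ReflTransGen (NilBraidMove M) ω ω' ∧
      cs.IsReduced ω' ∧ cs.wordProd ω' = cs.wordProd ω := by
  induction ω with
  | nil => exact ⟨[], .refl, by simp [CoxeterSystem.IsReduced], rfl⟩
  | cons i ω ih =>
    obtain ⟨ρ, hmoves, hρ, hprod⟩ := ih
    have hcons := NilBraidMove.reflTransGen_cons i hmoves
    by_cases hdesc : cs.IsLeftDescent (cs.wordProd ρ) i
    · obtain ⟨τ, hτ, hτρ⟩ := cs.exists_isReduced_cons hdesc
      refine ⟨τ, ?_, by simpa using hτ.drop 1, ?_⟩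
      · refine (hcons.trans (NilBraidMove.reflTransGen_cons i
          (hρ.reflTransGen_nilBraidMove cs hτ hτρ.symm))).tail (.inl ⟨[], τ, i, rfl, rfl⟩)
      · rw [wordProd_cons, ← hprod, ← hτρ, wordProd_cons, simple_mul_simple_cancel_left]
    · refine ⟨i :: ρ, hcons, ?_, by rw [wordProd_cons, wordProd_cons, hprod]⟩
      rw [CoxeterSystem.IsReduced, wordProd_cons, cs.not_isLeftDescent_iff.mp hdesc, hρ.eq, List.length_cons]
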